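/- Let d ≥ 1 be an integer and a > −1. For every t ≠ 0 and every u₀ ∈ 𝒮(ℝ^{d+1}_+), the integral 𝕊_a(t)u₀(X) := ∫_{ℝ^{d+1}_+} 𝕊_a(X,Y,t) u₀(Y) dω_a(Y) converges absolutely for every X ∈ ℝ^{d+1}_+, and conservation of mass holds: ‖𝕊_a(t)u₀‖_{L²_a(ℝ^{d+1}_+)} = ‖u₀‖_{L²_a(ℝ^{d+1}_+)}. -/

import Mathlib

open MeasureTheory Filter Complex
open scoped ENNReal NNReal Topology

noncomputable section

/-- Bessel function of the first kind of order `ν`, via its power series. -/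
def besselJ (ν : ℝ) (x : ℝ) : ℝ :=
  ∑' k : ℕ, ((-1 : ℝ) ^ k / ((k.factorial : ℝ) * Real.Gamma ((k : ℝ) + ν + 1))) *
    (x / 2) ^ (2 * (k : ℝ) + ν)

/-- The half-line Schrödinger–Bessel kernel `S_a(z,ζ,t)`. -/
def SaK (a : ℝ) (z ζ t : ℝ) : ℂ :=
  (Complex.exp (-Complex.I * ((Real.sign t : ℝ) : ℂ) * (((a + 1) * Real.pi / 4 : ℝ) : ℂ)) /
      (((2 * |t|) ^ ((a + 1) / 2) : ℝ) : ℂ)) *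
    (((z * ζ / (2 * |t|)) ^ ((1 - a) / 2) : ℝ) : ℂ) *
    ((besselJ ((a - 1) / 2) (z * ζ / (2 * |t|)) : ℝ) : ℂ) *
    Complex.exp (Complex.I * ((z ^ 2 + ζ ^ 2 : ℝ) : ℂ) / ((4 * t : ℝ) : ℂ))

/-- The boundary kernel `S_a(z,0,t)`. -/
def Sa0 (a : ℝ) (z t : ℝ) : ℂ :=
  ((((2 : ℝ) ^ (-a) / Real.Gamma ((a + 1) / 2) : ℝ)) : ℂ) *
    Complex.exp (-Complex.I * ((Real.sign t : ℝ) : ℂ) * (((a + 1) * Real.pi / 4 : ℝ) : ℂ)) *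
    (((|t| ^ (-((a + 1) / 2)) : ℝ)) : ℂ) *
    Complex.exp (Complex.I * ((z ^ 2 : ℝ) : ℂ) / ((4 * t : ℝ) : ℂ))

/-- The free Schrödinger kernel on `ℝ^d` (principal branch of the power). -/
def Sfree (d : ℕ) (x y : Fin d → ℝ) (t : ℝ) : ℂ :=
  (4 * (Real.pi : ℂ) * Complex.I * (t : ℂ)) ^ (-(d : ℂ) / 2) *
    Complex.exp (Complex.I * ((∑ i, (x i - y i) ^ 2 : ℝ) : ℂ) / ((4 * t : ℝ) : ℂ))

/-- The full half-space kernel `𝕊_a(X,Y,t) = S_a(z,ζ,t)·S(x,y,t)`. -/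
def SK (d : ℕ) (a : ℝ) (X Y : (Fin d → ℝ) × ℝ) (t : ℝ) : ℂ :=
  SaK a X.2 Y.2 t * Sfree d X.1 Y.1 t

/-- The weighted measure `dω_a = z^a dx dz` on the half-space `ℝ^d × (0,∞)`. -/
def ωa (d : ℕ) (a : ℝ) : Measure ((Fin d → ℝ) × ℝ) :=
  (volume : Measure (Fin d → ℝ)).prod
    (((volume : Measure ℝ).restrict (Set.Ioi 0)).withDensity fun z => ENNReal.ofReal (z ^ a))

/-- The mixed norm `‖Φ‖_{L^q_t L^r_x}`. -/
def mixNorm (d : ℕ) (q r : ℝ) (Φ : (Fin d → ℝ) → ℝ → ℂ) : ℝ≥0∞ :=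
  (∫⁻ t : ℝ, (∫⁻ x : Fin d → ℝ, (‖Φ x t‖₊ : ℝ≥0∞) ^ r) ^ (q / r)) ^ (1 / q)

/-- The mixed norm `‖Φ‖_{L^q_T L^r_x}` over the time interval `[0,T]`. -/
def mixNormT (d : ℕ) (T q r : ℝ) (Φ : (Fin d → ℝ) → ℝ → ℂ) : ℝ≥0∞ :=
  (∫⁻ t in Set.Ioc (0 : ℝ) T, (∫⁻ x : Fin d → ℝ, (‖Φ x t‖₊ : ℝ≥0∞) ^ r) ^ (q / r)) ^ (1 / q)

/-- The homogeneous propagator `𝕋_a^*(u₀)`. -/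
def Tstar (d : ℕ) (a : ℝ) (u₀ : (Fin d → ℝ) × ℝ → ℂ) (X : (Fin d → ℝ) × ℝ) (t : ℝ) : ℂ :=
  if t = 0 then u₀ X else ∫ Y, SK d a X Y t * u₀ Y ∂(ωa d a)

/-- The inhomogeneous Duhamel term `𝔻_a(F)`. -/
def Dop (d : ℕ) (a : ℝ) (F : (Fin d → ℝ) × ℝ → ℝ → ℂ) (X : (Fin d → ℝ) × ℝ) (t : ℝ) : ℂ :=
  ∫ τ in (0 : ℝ)..t, ∫ Y, SK d a X Y (t - τ) * F Y τ ∂(ωa d a)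

/-- The boundary-data operator `Θ_a^*(Φ)`. -/
def ThetaStar (d : ℕ) (a : ℝ) (Φ : (Fin d → ℝ) → ℝ → ℂ) (X : (Fin d → ℝ) × ℝ) (t : ℝ) : ℂ :=
  Complex.I *
    ∫ τ in (0 : ℝ)..t, ∫ y : Fin d → ℝ, Sa0 a X.2 (t - τ) * Sfree d X.1 y (t - τ) * Φ y τ

/-- The weight `k(z) = min{1, z^{a/2}}`. -/
def kwt (a z : ℝ) : ℝ := min 1 (z ^ (a / 2))

/-- The weight `k^{-1}(z) = max{1, z^{-a/2}}`. -/
def kinv (a z : ℝ) : ℝ := max 1 (z ^ (-a / 2))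

/-!
Expanding `|x - y|²` and rewriting `J_ν` through the entire Bessel–Clifford function, the kernel of
the propagator splits as (constant) · (quadratic phase in `X`) · (kernel of the Fourier transform in
`x` and of the Hankel transform in `z`, at a dilated frequency) · (quadratic phase in `Y`). The
quadratic phases have modulus one and preserve the Schwartz class, and the constant is exactly the
one that compensates the Jacobian of the dilation, so mass conservation reduces to Plancherel's
identity for the Fourier transform and for the Hankel transform.

For the latter, Weber's integral says that the Hankel transform sends the Gaussian
`exp (-p z²)` to a multiple of a Gaussian with parameter `1 / (4p)`. This preserves the inner
products of Gaussians, whose span is dense in `L²(z^a dz)` because a function orthogonal to all of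
them has a vanishing Laplace transform in the variable `z²`.
-/

open scoped FourierTransform

section ExponentialGeneratingFunction

variable {c : ℕ → ℝ}

/-- The exponential generating function `∑ c_k s^k / k!` of a sequence. -/
def egf (c : ℕ → ℝ) (s : ℝ) : ℝ := ∑' k : ℕ, c k * (s ^ k / k.factorial)

lemma summable_egf (hc : BddAbove (Set.range fun k => |c k|)) (s : ℝ) :
    Summable fun k : ℕ => c k * (s ^ k / k.factorial) := by
  obtain ⟨C, hC⟩ := hc
  refine .of_norm_bounded ((Real.summable_pow_div_factorial |s|).mul_left C) fun k => ?_
  rw [Real.norm_eq_abs, abs_mul, abs_div, abs_pow, Nat.abs_cast]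
  gcongr
  exact hC ⟨k, rfl⟩

lemma natCast_mul_pow_div_factorial (k : ℕ) (s : ℝ) :
    ((k + 1 : ℕ) : ℝ) * (s ^ k / (k + 1).factorial) = s ^ k / k.factorial := by
  rw [Nat.factorial_succ]
  push_cast
  field_simp

lemma bddAbove_range_abs_succ (hc : BddAbove (Set.range fun k => |c k|)) :
    BddAbove (Set.range fun k => |c (k + 1)|) :=
  hc.mono (Set.range_comp_subset_range (· + 1) fun k => |c k|)

lemma hasSum_natCast_mul_egf (hc : BddAbove (Set.range fun k => |c k|)) (s : ℝ) :
    HasSum (fun k : ℕ => k * c k * (s ^ k / k.factorial)) (s * egf (fun k => c (k + 1)) s) := by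
  rw [← hasSum_nat_add_iff' 1]
  simp only [Finset.sum_range_one, Nat.cast_zero, zero_mul, sub_zero]
  refine ((summable_egf (bddAbove_range_abs_succ hc) s).hasSum.mul_left s).congr_fun fun k => ?_
  linear_combination c (k + 1) * s * natCast_mul_pow_div_factorial k s

lemma hasDerivAt_egf (hc : BddAbove (Set.range fun k => |c k|)) (s : ℝ) :
    HasDerivAt (egf c) (egf (fun k => c (k + 1)) s) s := by
  have hs : s ∈ Metric.ball (0 : ℝ) (|s| + 1) := by simp
  have hsum (R : ℝ) : Summable fun k : ℕ => (k : ℝ) * (R ^ (k - 1) / k.factorial) := by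
    rw [← summable_nat_add_iff 1]
    exact (Real.summable_pow_div_factorial R).congr fun k =>
      (natCast_mul_pow_div_factorial k R).symm
  obtain ⟨C, hC⟩ := id hc
  have hbound (k : ℕ) (y : ℝ) (hy : y ∈ Metric.ball (0 : ℝ) (|s| + 1)) :
      ‖c k * (k * (y ^ (k - 1) / k.factorial))‖
        ≤ C * (k * ((|s| + 1) ^ (k - 1) / k.factorial)) := by
    rw [Real.norm_eq_abs, abs_mul, abs_mul, abs_div, abs_pow, Nat.abs_cast, Nat.abs_cast]
    gcongr
    · exact (abs_nonneg _).trans (hC ⟨k, rfl⟩)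
    · exact hC ⟨k, rfl⟩
    · exact (mem_ball_zero_iff.1 hy).le
  have hderiv := hasDerivAt_tsum_of_isPreconnected ((hsum _).mul_left C) Metric.isOpen_ball
    (convex_ball (0 : ℝ) _).isPreconnected
    (fun k y _ => (((hasDerivAt_pow k y).div_const _).congr_deriv
      (mul_div_assoc _ _ _)).const_mul (c k)) hbound hs (summable_egf hc s) hs
  refine hderiv.congr_deriv ?_
  have hsummable := Summable.of_norm_bounded ((hsum _).mul_left C) fun k => hbound k s hs
  rw [hsummable.tsum_eq_zero_add, Nat.cast_zero, zero_mul, mul_zero, zero_add, egf]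
  simp only [Nat.add_sub_cancel, natCast_mul_pow_div_factorial]

end ExponentialGeneratingFunction

section BesselClifford

/-- The Bessel–Clifford function `C_ν(s) = ∑ s^k / (k! Γ(k + ν + 1))`, the entire function
such that `J_ν(x) = (x/2)^ν C_ν(-x²/4)`. -/
def besselClifford (ν : ℝ) : ℝ → ℝ := egf fun k => (Real.Gamma (k + ν + 1))⁻¹

lemma bddAbove_range_abs_inv_Gamma (ν : ℝ) :
    BddAbove (Set.range fun k : ℕ => |(Real.Gamma (k + ν + 1))⁻¹|) := by
  refine IsBoundedUnder.bddAbove_range ⟨1, eventually_map.2 ?_⟩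
  filter_upwards [eventually_ge_atTop ⌈1 - ν⌉₊] with k hk
  have hk' : 2 ≤ (k : ℝ) + ν + 1 := by linarith [Nat.ceil_le.1 hk]
  have hΓ : 1 ≤ Real.Gamma (k + ν + 1) :=
    Real.Gamma_two.ge.trans (Real.Gamma_strictMonoOn_Ici.monotoneOn Set.self_mem_Ici hk' hk')
  rw [abs_of_nonneg (by positivity)]
  exact inv_le_one_of_one_le₀ hΓ

lemma summable_besselClifford (ν s : ℝ) :
    Summable fun k : ℕ => (Real.Gamma (k + ν + 1))⁻¹ * (s ^ k / k.factorial) :=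
  summable_egf (bddAbove_range_abs_inv_Gamma ν) s

lemma inv_Gamma_eq (x : ℝ) : (Real.Gamma x)⁻¹ = x * (Real.Gamma (x + 1))⁻¹ := by
  rcases eq_or_ne x 0 with rfl | hx
  · simp
  · rw [Real.Gamma_add_one hx, mul_inv, mul_inv_cancel_left₀ hx]

lemma inv_Gamma_succ (ν : ℝ) :
    (fun k : ℕ => (Real.Gamma ((k + 1 : ℕ) + ν + 1))⁻¹) =
      fun k : ℕ => (Real.Gamma (k + (ν + 1) + 1))⁻¹ := by
  ext k
  congr 2
  push_cast
  ring

lemma hasDerivAt_besselClifford (ν s : ℝ) :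
    HasDerivAt (besselClifford ν) (besselClifford (ν + 1) s) s := by
  simpa only [besselClifford, inv_Gamma_succ] using
    hasDerivAt_egf (bddAbove_range_abs_inv_Gamma ν) s

lemma continuous_besselClifford (ν : ℝ) : Continuous (besselClifford ν) :=
  continuous_iff_continuousAt.2 fun s => (hasDerivAt_besselClifford ν s).continuousAt

lemma besselClifford_recurrence (ν s : ℝ) :
    besselClifford ν s =
      (ν + 1) * besselClifford (ν + 1) s + s * besselClifford (ν + 1 + 1) s := by
  have hb := bddAbove_range_abs_inv_Gamma (ν + 1)
  have h₁ := (summable_besselClifford (ν + 1) s).hasSum.mul_left (ν + 1)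
  have h₂ := hasSum_natCast_mul_egf hb s
  rw [inv_Gamma_succ] at h₂
  refine (summable_besselClifford ν s).hasSum.unique ((h₁.add h₂).congr_fun fun k => ?_)
  rw [inv_Gamma_eq, add_right_comm (k + ν) 1 1, add_assoc (k : ℝ) ν 1]
  ring

lemma abs_besselClifford_neg_le {ν : ℝ} (hν : -1 / 2 ≤ ν) {s : ℝ} (hs : 0 ≤ s) :
    |besselClifford ν (-s)| ≤ |besselClifford ν 0| := by
  let energy (s : ℝ) : ℝ := besselClifford ν (-s) ^ 2 + s * besselClifford (ν + 1) (-s) ^ 2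
  have hC (μ s : ℝ) :
      HasDerivAt (fun s => besselClifford μ (-s)) (-besselClifford (μ + 1) (-s)) s := by
    simpa [Function.comp_def] using (hasDerivAt_besselClifford μ (-s)).comp s (hasDerivAt_neg s)
  have henergy (s : ℝ) :
      HasDerivAt energy (-(2 * ν + 1) * besselClifford (ν + 1) (-s) ^ 2) s := by
    refine (((hC ν s).pow 2).add ((hasDerivAt_id s).mul ((hC (ν + 1) s).pow 2))).congr_deriv ?_
    simp only [id, Pi.pow_apply, Nat.cast_ofNat, Nat.add_one_sub_one, pow_one]
    rw [besselClifford_recurrence ν]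
    ring
  have hanti : AntitoneOn energy (Set.Ici 0) :=
    antitoneOn_of_deriv_nonpos (convex_Ici 0)
      (fun s _ => (henergy s).continuousAt.continuousWithinAt)
      (fun s _ => (henergy s).differentiableAt.differentiableWithinAt) fun s _ => by
        rw [(henergy s).deriv]
        exact mul_nonpos_of_nonpos_of_nonneg (by linarith) (sq_nonneg _)
  have hle : energy s ≤ energy 0 := hanti Set.self_mem_Ici hs hs
  simp only [energy, neg_zero, zero_mul, add_zero] at hle
  exact sq_le_sq.1 ((le_add_of_nonneg_right (by positivity)).trans hle)

lemma exists_abs_besselClifford_neg_le {ν : ℝ} (hν : -3 / 2 ≤ ν) :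
    ∃ C, ∀ s, 0 ≤ s → |besselClifford ν (-s)| ≤ C * (1 + s) := by
  refine ⟨|ν + 1| * |besselClifford (ν + 1) 0| + |besselClifford (ν + 1 + 1) 0|, fun s hs => ?_⟩
  calc |besselClifford ν (-s)|
      = |(ν + 1) * besselClifford (ν + 1) (-s) + -s * besselClifford (ν + 1 + 1) (-s)| := by
        rw [besselClifford_recurrence]
    _ ≤ |ν + 1| * |besselClifford (ν + 1) (-s)| + s * |besselClifford (ν + 1 + 1) (-s)| := by
        rw [← abs_of_nonneg hs, ← abs_mul, ← abs_mul, abs_of_nonneg hs, neg_mul]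
        exact abs_sub _ _
    _ ≤ |ν + 1| * |besselClifford (ν + 1) 0| + s * |besselClifford (ν + 1 + 1) 0| := by
        have h₁ := abs_besselClifford_neg_le (ν := ν + 1) (by linarith) hs
        have h₂ := abs_besselClifford_neg_le (ν := ν + 1 + 1) (by linarith) hs
        gcongr
    _ ≤ _ := by
        have := mul_nonneg hs (mul_nonneg (abs_nonneg (ν + 1))
          (abs_nonneg (besselClifford (ν + 1) 0)))
        linarith [abs_nonneg (besselClifford (ν + 1 + 1) 0)]

lemma rpow_neg_mul_besselJ (ν : ℝ) {x : ℝ} (hx : 0 < x) :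
    x ^ (-ν) * besselJ ν x = 2 ^ (-ν) * besselClifford ν (-(x ^ 2 / 4)) := by
  rw [besselJ, besselClifford, egf, ← tsum_mul_left, ← tsum_mul_left]
  refine tsum_congr fun k => ?_
  have hpow : (x / 2) ^ (2 * k + ν) = (x ^ 2 / 4) ^ k * (x ^ ν * 2 ^ (-ν)) := by
    rw [Real.rpow_add (by positivity), Real.div_rpow hx.le zero_le_two ν,
      Real.rpow_neg zero_le_two, Real.rpow_mul (by positivity), Real.rpow_natCast,
      Real.rpow_two, div_pow, div_eq_mul_inv (x ^ ν)]
    norm_num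
  have hcancel : x ^ (-ν) * x ^ ν = 1 := by rw [← Real.rpow_add hx, neg_add_cancel, Real.rpow_zero]
  rw [hpow, neg_pow (x ^ 2 / 4), div_mul_eq_div_mul_one_div, ← one_div]
  linear_combination
    ((-1) ^ k / k.factorial * (1 / Real.Gamma (k + ν + 1))) * (x ^ 2 / 4) ^ k * 2 ^ (-ν) * hcancel

end BesselClifford

lemma lintegral_enorm_sq_eq_eLpNorm_sq {α E : Type*} [MeasurableSpace α] [NormedAddCommGroup E]
    (μ : Measure α) (f : α → E) : ∫⁻ x, ‖f x‖ₑ ^ 2 ∂μ = eLpNorm f 2 μ ^ 2 := by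
  simpa only [NNReal.coe_ofNat, ENNReal.coe_ofNat, ENNReal.rpow_ofNat] using
    (eLpNorm_nnreal_pow_eq_lintegral (f := f) (μ := μ) (p := 2) two_ne_zero).symm

section Dilation

variable {E : Type*} [NormedAddCommGroup E] [NormedSpace ℝ E] [FiniteDimensional ℝ E]
  [MeasurableSpace E] [BorelSpace E] (μ : Measure E) [μ.IsAddHaarMeasure]

lemma lintegral_comp_smul (f : E → ℝ≥0∞) {r : ℝ} (hr : r ≠ 0) :
    ∫⁻ x, f (r • x) ∂μ = ENNReal.ofReal |(r ^ Module.finrank ℝ E)⁻¹| * ∫⁻ x, f x ∂μ := by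
  rw [← smul_eq_mul, ← lintegral_smul_measure, ← Measure.map_addHaar_smul μ hr]
  exact (lintegral_map_equiv f (Homeomorph.smulOfNeZero r hr).toMeasurableEquiv).symm

end Dilation

section RpowMeasure

/-- The measure `z^a dz` on the half-line `(0, ∞)`. -/
def rpowMeasure (a : ℝ) : Measure ℝ :=
  (volume.restrict (Set.Ioi 0)).withDensity fun z => ENNReal.ofReal (z ^ a)

instance (a : ℝ) : SigmaFinite (rpowMeasure a) :=
  SigmaFinite.withDensity_ofReal _

lemma ae_rpowMeasure_pos (a : ℝ) : ∀ᵐ z ∂rpowMeasure a, 0 < z :=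
  (withDensity_absolutelyContinuous _ _).ae_le (ae_restrict_mem measurableSet_Ioi)

lemma lintegral_rpowMeasure (a : ℝ) (f : ℝ → ℝ≥0∞) :
    ∫⁻ z, f z ∂rpowMeasure a = ∫⁻ z in Set.Ioi 0, ENNReal.ofReal (z ^ a) * f z :=
  lintegral_withDensity_eq_lintegral_mul_non_measurable _ (by fun_prop)
    (ae_of_all _ fun _ => ENNReal.ofReal_lt_top) f

lemma lintegral_rpowMeasure_comp_mul (a : ℝ) {r : ℝ} (hr : 0 < r) (f : ℝ → ℝ≥0∞) :
    ∫⁻ z, f (r * z) ∂rpowMeasure a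
      = ENNReal.ofReal (r ^ (-(a + 1))) * ∫⁻ z, f z ∂rpowMeasure a := by
  let g : ℝ → ℝ≥0∞ := (Set.Ioi 0).indicator fun z => ENNReal.ofReal (z ^ a) * f z
  have hg (z : ℝ) : ENNReal.ofReal (r ^ (-a)) * g (r * z)
      = (Set.Ioi 0).indicator (fun z => ENNReal.ofReal (z ^ a) * f (r * z)) z := by
    by_cases hz : 0 < z
    · have hrz : 0 < r * z := mul_pos hr hz
      rw [show g (r * z) = _ from Set.indicator_of_mem (Set.mem_Ioi.2 hrz) _,
        Set.indicator_of_mem (Set.mem_Ioi.2 hz), ← mul_assoc,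
        ← ENNReal.ofReal_mul (by positivity), Real.mul_rpow hr.le hz.le,
        ← mul_assoc, ← Real.rpow_add hr, neg_add_cancel, Real.rpow_zero, one_mul]
    · have hrz : ¬0 < r * z := by rwa [mul_pos_iff_of_pos_left hr]
      rw [show g (r * z) = 0 from Set.indicator_of_notMem hrz _, mul_zero,
        Set.indicator_of_notMem (s := Set.Ioi 0) hz]
  calc ∫⁻ z, f (r * z) ∂rpowMeasure a
      = ENNReal.ofReal (r ^ (-a)) * ∫⁻ z, g (r • z) := by
        simp only [lintegral_rpowMeasure, ← lintegral_indicator measurableSet_Ioi, ← hg,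
          smul_eq_mul]
        exact lintegral_const_mul' _ _ ENNReal.ofReal_ne_top
    _ = ENNReal.ofReal (r ^ (-(a + 1))) * ∫⁻ z, g z := by
        rw [lintegral_comp_smul volume g hr.ne', ← mul_assoc, ← ENNReal.ofReal_mul (by positivity),
          Module.finrank_self, pow_one, abs_of_pos (inv_pos.2 hr), ← Real.rpow_neg_one r,
          ← Real.rpow_add hr, neg_add]
    _ = _ := by rw [lintegral_indicator measurableSet_Ioi, lintegral_rpowMeasure]

section Bochner

variable {E : Type*} [NormedAddCommGroup E] [NormedSpace ℝ E]

lemma toReal_rpow_smul_ae_eq (a : ℝ) (f : ℝ → E) :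
    (fun z => (ENNReal.ofReal (z ^ a)).toReal • f z)
      =ᵐ[volume.restrict (Set.Ioi 0)] fun z => z ^ a • f z := by
  filter_upwards [ae_restrict_mem measurableSet_Ioi] with z hz
  rw [ENNReal.toReal_ofReal (Real.rpow_nonneg (le_of_lt hz) a)]

lemma integrable_rpowMeasure_iff {a : ℝ} {f : ℝ → E} :
    Integrable f (rpowMeasure a) ↔ IntegrableOn (fun z => z ^ a • f z) (Set.Ioi 0) := by
  rw [rpowMeasure, integrable_withDensity_iff_integrable_smul' (by fun_prop) (by simp),
    IntegrableOn, integrable_congr (toReal_rpow_smul_ae_eq a f)]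

lemma integral_rpowMeasure (a : ℝ) (f : ℝ → E) :
    ∫ z, f z ∂rpowMeasure a = ∫ z in Set.Ioi 0, z ^ a • f z := by
  rw [rpowMeasure, integral_withDensity_eq_integral_toReal_smul (by fun_prop) (by simp),
    integral_congr_ae (toReal_rpow_smul_ae_eq a f)]

end Bochner

variable {a : ℝ}

lemma integrable_inv_one_add_abs_pow (ha : -1 < a) {M : ℕ} (hM : a + 1 < M) :
    Integrable (fun ζ : ℝ => ((1 + |ζ|) ^ M)⁻¹) (rpowMeasure a) := by
  have hcont : Continuous fun ζ : ℝ => ((1 + |ζ|) ^ M)⁻¹ :=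
    Continuous.inv₀ (by fun_prop) fun ζ => by positivity
  have htop : (fun ζ : ℝ => ((1 + |ζ|) ^ M)⁻¹) =O[atTop] (· ^ (-(M : ℝ))) := by
    refine .of_bound 1 ?_
    filter_upwards [eventually_gt_atTop 0] with ζ hζ
    rw [one_mul, Real.norm_of_nonneg (by positivity), Real.norm_of_nonneg (by positivity),
      Real.rpow_neg hζ.le, Real.rpow_natCast, abs_of_pos hζ]
    gcongr
    linarith
  have hbot : (fun ζ : ℝ => ((1 + |ζ|) ^ M)⁻¹) =O[𝓝[>] 0] (· ^ (-0 : ℝ)) := by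
    simpa using (hcont.continuousAt.isBigO_one ℝ).mono nhdsWithin_le_nhds
  simpa [integrable_rpowMeasure_iff] using mellin_convergent_of_isBigO_scalar
    (hcont.locallyIntegrable.locallyIntegrableOn _) htop hM hbot (by linarith)

lemma integrable_pow_mul_exp_neg_mul_sq (ha : -1 < a) {p : ℝ} (hp : 0 < p) (k : ℕ) :
    Integrable (fun z => z ^ k * Real.exp (-p * z ^ 2)) (rpowMeasure a) := by
  rw [integrable_rpowMeasure_iff]
  have hak : -1 < a + k := by linarith [k.cast_nonneg (α := ℝ)]
  refine (integrableOn_rpow_mul_exp_neg_mul_sq hp hak).congr_fun (fun z hz => ?_) measurableSet_Ioi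
  simp only [smul_eq_mul]
  rw [Real.rpow_add hz, Real.rpow_natCast, mul_assoc]

lemma integrable_exp_neg_mul_sq_rpowMeasure (ha : -1 < a) {p : ℝ} (hp : 0 < p) :
    Integrable (fun z => Real.exp (-p * z ^ 2)) (rpowMeasure a) := by
  simpa using integrable_pow_mul_exp_neg_mul_sq ha hp 0

lemma integral_pow_mul_exp_neg_mul_sq (ha : -1 < a) {p : ℝ} (hp : 0 < p) (k : ℕ) :
    ∫ z, z ^ (2 * k) * Real.exp (-p * z ^ 2) ∂rpowMeasure a
      = p ^ (-((a + 1) / 2)) / 2 * (Real.Gamma (k + (a - 1) / 2 + 1) / p ^ k) := by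
  have hak : -1 < a + 2 * k := by linarith [k.cast_nonneg (α := ℝ)]
  have hmoment := _root_.integral_rpow_mul_exp_neg_mul_rpow two_pos hak hp
  rw [show -(a + 2 * k + 1) / 2 = -((a + 1) / 2) - k by ring,
    show (a + 2 * k + 1) / 2 = k + (a - 1) / 2 + 1 by ring, Real.rpow_sub hp,
    Real.rpow_natCast] at hmoment
  calc ∫ z, z ^ (2 * k) * Real.exp (-p * z ^ 2) ∂rpowMeasure a
      = ∫ z in Set.Ioi 0, z ^ (a + 2 * k) * Real.exp (-p * z ^ (2 : ℝ)) := by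
        rw [integral_rpowMeasure]
        refine setIntegral_congr_fun measurableSet_Ioi fun z hz => ?_
        have hpow : z ^ (2 * (k : ℝ)) = z ^ (2 * k) := mod_cast Real.rpow_natCast z (2 * k)
        simp only [smul_eq_mul]
        rw [Real.rpow_add hz, hpow, Real.rpow_two, mul_assoc]
    _ = _ := by rw [hmoment]; ring

lemma integral_exp_neg_mul_sq_rpowMeasure (ha : -1 < a) {p : ℝ} (hp : 0 < p) :
    ∫ z, Real.exp (-p * z ^ 2) ∂rpowMeasure a
      = p ^ (-((a + 1) / 2)) / 2 * Real.Gamma ((a - 1) / 2 + 1) := by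
  simpa using integral_pow_mul_exp_neg_mul_sq ha hp 0

lemma integral_besselClifford_mul_exp_neg_mul_sq (ha : -1 < a) {p : ℝ} (hp : 0 < p) (s : ℝ) :
    ∫ ζ, besselClifford ((a - 1) / 2) (s * ζ ^ 2) * Real.exp (-p * ζ ^ 2) ∂rpowMeasure a
      = p ^ (-((a + 1) / 2)) / 2 * Real.exp (s / p) := by
  let term (s : ℝ) (k : ℕ) (ζ : ℝ) : ℝ :=
    (Real.Gamma (k + (a - 1) / 2 + 1))⁻¹ * (s ^ k / k.factorial) *
      (ζ ^ (2 * k) * Real.exp (-p * ζ ^ 2))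
  have hΓ (k : ℕ) : 0 < Real.Gamma (k + (a - 1) / 2 + 1) :=
    Real.Gamma_pos_of_pos (by linarith [k.cast_nonneg (α := ℝ)])
  have hint (s : ℝ) (k : ℕ) : Integrable (term s k) (rpowMeasure a) :=
    (integrable_pow_mul_exp_neg_mul_sq ha hp (2 * k)).const_mul _
  have hval (s : ℝ) (k : ℕ) :
      ∫ ζ, term s k ζ ∂rpowMeasure a
        = p ^ (-((a + 1) / 2)) / 2 * ((s / p) ^ k / k.factorial) := by
    rw [integral_const_mul, integral_pow_mul_exp_neg_mul_sq ha hp, div_pow]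
    linear_combination p ^ (-((a + 1) / 2)) / 2 * (s ^ k / p ^ k / k.factorial) *
      inv_mul_cancel₀ (hΓ k).ne'
  have hnorm (k : ℕ) (ζ : ℝ) : ‖term s k ζ‖ = term |s| k ζ := by
    have := hΓ k
    have hζ : 0 ≤ ζ ^ (2 * k) := (even_two_mul k).pow_nonneg ζ
    rw [Real.norm_eq_abs, abs_mul, abs_mul, abs_div, abs_pow, Nat.abs_cast,
      abs_of_nonneg (inv_pos.2 this).le, abs_of_nonneg (mul_nonneg hζ (Real.exp_nonneg _))]
  have hsum : Summable fun k => ∫ ζ, ‖term s k ζ‖ ∂rpowMeasure a := by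
    simp only [hnorm, hval]
    exact (Real.summable_pow_div_factorial _).mul_left _
  calc ∫ ζ, besselClifford ((a - 1) / 2) (s * ζ ^ 2) * Real.exp (-p * ζ ^ 2) ∂rpowMeasure a
      = ∫ ζ, ∑' k, term s k ζ ∂rpowMeasure a := by
        congr 1 with ζ
        rw [besselClifford, egf, ← tsum_mul_right]
        refine tsum_congr fun k => ?_
        rw [mul_pow, ← pow_mul]
        ring
    _ = ∑' k : ℕ, p ^ (-((a + 1) / 2)) / 2 * ((s / p) ^ k / k.factorial) := by
        rw [← integral_tsum_of_summable_integral_norm (hint s) hsum]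
        simp only [hval]
    _ = _ := by rw [tsum_mul_left, Real.exp_eq_exp_ℝ, NormedSpace.exp_eq_tsum_div]

end RpowMeasure

section Moments

variable {α F : Type*} [MeasurableSpace α] {μ : Measure α} [NormedAddCommGroup F] [NormedSpace ℝ F]
  {e : α → Set.Icc (0 : ℝ) 1} {k : α → F}

lemma integrable_continuousMap_comp_smul (he : Measurable e) (hk : Integrable k μ)
    (φ : C(Set.Icc (0 : ℝ) 1, ℝ)) : Integrable (fun x => φ (e x) • k x) μ :=
  hk.bdd_smul ‖φ‖ (φ.continuous.measurable.comp he).aestronglyMeasurable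
    (ae_of_all _ fun x => φ.norm_coe_le_norm (e x))

lemma integral_eval_smul_eq_zero (he : Measurable e) (hk : Integrable k μ)
    (h : ∀ n : ℕ, ∫ x, (e x : ℝ) ^ n • k x ∂μ = 0) (P : Polynomial ℝ) :
    ∫ x, P.eval (e x : ℝ) • k x ∂μ = 0 := by
  have hint (P : Polynomial ℝ) : Integrable (fun x => P.eval (e x : ℝ) • k x) μ :=
    integrable_continuousMap_comp_smul he hk (P.toContinuousMapOn _)
  induction P using Polynomial.induction_on' with
  | add P Q hP hQ =>
    simp only [Polynomial.eval_add, add_smul]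
    rw [integral_add (hint P) (hint Q), hP, hQ, add_zero]
  | monomial n c =>
    simp only [Polynomial.eval_monomial, mul_smul]
    rw [integral_smul, h, smul_zero]

lemma integral_continuousMap_comp_smul_eq_zero (he : Measurable e) (hk : Integrable k μ)
    (h : ∀ n : ℕ, ∫ x, (e x : ℝ) ^ n • k x ∂μ = 0) (φ : C(Set.Icc (0 : ℝ) 1, ℝ)) :
    ∫ x, φ (e x) • k x ∂μ = 0 := by
  have hle (ε : ℝ) (hε : 0 < ε) : ‖∫ x, φ (e x) • k x ∂μ‖ ≤ ε * ∫ x, ‖k x‖ ∂μ := by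
    obtain ⟨P, hP⟩ := exists_polynomial_near_continuousMap 0 1 φ ε hε
    let ψ := P.toContinuousMapOn (Set.Icc 0 1)
    have hsub : ∫ x, φ (e x) • k x ∂μ = ∫ x, (φ - ψ) (e x) • k x ∂μ := by
      simp only [ContinuousMap.sub_apply, sub_smul]
      rw [integral_sub (integrable_continuousMap_comp_smul he hk φ)
        (integrable_continuousMap_comp_smul he hk ψ)]
      exact (sub_eq_self.2 (integral_eval_smul_eq_zero he hk h P)).symm
    rw [hsub, ← integral_const_mul]
    refine norm_integral_le_of_norm_le (hk.norm.const_mul ε) (ae_of_all _ fun x => ?_)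
    rw [norm_smul]
    gcongr
    exact ((φ - ψ).norm_coe_le_norm (e x)).trans (norm_sub_rev φ ψ ▸ hP.le)
  have hlim : Tendsto (fun ε : ℝ => ε * ∫ x, ‖k x‖ ∂μ) (𝓝[>] 0) (𝓝 0) :=
    ((continuous_mul_const _).tendsto' 0 0 (zero_mul _)).mono_left nhdsWithin_le_nhds
  exact norm_le_zero_iff.1 (ge_of_tendsto hlim (eventually_mem_nhdsWithin.mono hle))

end Moments

section GaussianUniqueness

lemma exp_neg_sq_mem_Icc (z : ℝ) : Real.exp (-z ^ 2) ∈ Set.Icc (0 : ℝ) 1 :=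
  ⟨Real.exp_nonneg _, Real.exp_le_one_iff.2 (neg_nonpos.2 (sq_nonneg z))⟩

lemma exists_continuousMap_exp_neg_sq_eq {g : ℝ → ℝ} (hg : Continuous g)
    (hgc : HasCompactSupport g) :
    ∃ φ : C(Set.Icc (0 : ℝ) 1, ℝ), ∀ z, 0 < z → φ ⟨_, exp_neg_sq_mem_Icc z⟩ = g z := by
  have hzero : Tendsto (fun s => g √(-Real.log s)) (𝓝[≠] 0) (𝓝 0) :=
    (hgc.is_zero_at_infty.mono_left atTop_le_cocompact).comp
      (Real.tendsto_sqrt_atTop.comp (tendsto_neg_atBot_atTop.comp Real.tendsto_log_nhdsNE_zero))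
  have hcont : Continuous (Function.update (fun s => g √(-Real.log s)) 0 0) := by
    refine continuous_iff_continuousAt.2 fun s => ?_
    rcases eq_or_ne s 0 with rfl | hs
    · exact continuousAt_update_same.2 hzero
    · refine (continuousAt_update_of_ne hs).2 ?_
      exact hg.continuousAt.comp
        (Real.continuous_sqrt.continuousAt.comp (Real.continuousAt_log hs).neg)
  refine ⟨⟨fun s => _, hcont.comp continuous_subtype_val⟩, fun z hz => ?_⟩
  simp [(Real.exp_pos _).ne', Real.sqrt_sq hz.le]

lemma ae_eq_zero_of_integral_exp_neg_mul_sq_smul_eq_zero {F : Type*} [NormedAddCommGroup F]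
    [NormedSpace ℝ F] [CompleteSpace F] {μ : Measure ℝ} (hμ : ∀ᵐ z ∂μ, 0 < z) {h : ℝ → F}
    (hint : Integrable (fun z => Real.exp (-z ^ 2) • h z) μ)
    (h0 : ∀ p : ℝ, 0 < p → ∫ z, Real.exp (-p * z ^ 2) • h z ∂μ = 0) : h =ᵐ[μ] 0 := by
  let e (z : ℝ) : Set.Icc (0 : ℝ) 1 := ⟨_, exp_neg_sq_mem_Icc z⟩
  have he : Measurable e := Measurable.subtype_mk (by fun_prop)
  have hpow (n : ℕ) : ∫ z, (e z : ℝ) ^ n • Real.exp (-z ^ 2) • h z ∂μ = 0 := by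
    rw [← h0 (n + 1) n.cast_add_one_pos]
    congr 1 with z
    rw [smul_smul, ← pow_succ, ← Real.exp_nat_mul]
    congr 2
    push_cast
    ring
  have hsmooth (g : ℝ → ℝ) (hg : Continuous g) (hgc : HasCompactSupport g) :
      ∫ z, g z • Real.exp (-z ^ 2) • h z ∂μ = 0 := by
    obtain ⟨φ, hφ⟩ := exists_continuousMap_exp_neg_sq_eq hg hgc
    rw [← integral_continuousMap_comp_smul_eq_zero he hint hpow φ]
    refine integral_congr_ae (hμ.mono fun z hz => ?_)
    simp only [e, hφ z hz]
  have hae := ae_eq_zero_of_integral_contDiff_smul_eq_zero hint.locallyIntegrable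
    fun g hg hgc => hsmooth g hg.continuous hgc
  exact hae.mono fun z hz => (smul_eq_zero.1 hz).resolve_left (Real.exp_pos _).ne'

end GaussianUniqueness

section GramMatrix

open Submodule in
lemma exists_linearIsometry_of_inner_eq {𝕜 E F ι : Type*} [RCLike 𝕜]
    [NormedAddCommGroup E] [InnerProductSpace 𝕜 E]
    [NormedAddCommGroup F] [InnerProductSpace 𝕜 F] [CompleteSpace F] {A : ι → E} {B : ι → F}
    (hdense : Dense (span 𝕜 (Set.range A) : Set E))
    (hgram : ∀ i j, inner 𝕜 (A i) (A j) = inner 𝕜 (B i) (B j)) :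
    ∃ U : E →ₗᵢ[𝕜] F, ∀ i, U (A i) = B i := by
  let combA := Finsupp.linearCombination 𝕜 A
  let combB := Finsupp.linearCombination 𝕜 B
  have hrange : DenseRange combA := by
    rwa [DenseRange, ← LinearMap.coe_range, Finsupp.range_linearCombination]
  have hinner (c : ι →₀ 𝕜) : inner 𝕜 (combA c) (combA c) = inner 𝕜 (combB c) (combB c) := by
    simp only [combA, combB, Finsupp.linearCombination_apply, Finsupp.sum, sum_inner, inner_sum,
      inner_smul_left, inner_smul_right, hgram]
  have hnorm (c : ι →₀ 𝕜) : ‖combB c‖ = ‖combA c‖ := by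
    simp only [norm_eq_sqrt_re_inner (𝕜 := 𝕜), hinner]
  let U : E →L[𝕜] F := combB.extendOfNorm combA
  have hU (c : ι →₀ 𝕜) : U (combA c) = combB c :=
    LinearMap.extendOfNorm_eq hrange ⟨1, fun c => by rw [hnorm, one_mul]⟩ c
  have hUnorm (f : E) : ‖U f‖ = ‖f‖ :=
    hrange.induction_on f (isClosed_eq (by fun_prop) (by fun_prop)) fun c => by rw [hU, hnorm]
  exact ⟨⟨U, hUnorm⟩, fun i => by simpa [combA, combB] using hU (Finsupp.single i 1)⟩

open Submodule in
lemma inner_apply_eq_of_inner_apply_eq {𝕜 E F ι : Type*} [RCLike 𝕜]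
    [NormedAddCommGroup E] [InnerProductSpace 𝕜 E] [NormedAddCommGroup F] [InnerProductSpace 𝕜 F]
    {A : ι → E} (hdense : Dense (span 𝕜 (Set.range A) : Set E)) {U : E →L[𝕜] F} {x : F} {y : E}
    (h : ∀ i, inner 𝕜 x (U (A i)) = inner 𝕜 y (A i)) (f : E) :
    inner 𝕜 x (U f) = inner 𝕜 y f := by
  have heq : innerSL 𝕜 x ∘L U = innerSL 𝕜 y :=
    ContinuousLinearMap.ext_on hdense (Set.forall_mem_range.2 h)
  exact DFunLike.congr_fun heq f

end GramMatrix

section GaussianLp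

variable {a : ℝ}

lemma memLp_ofReal_exp_neg_mul_sq (ha : -1 < a) {p : ℝ} (hp : 0 < p) :
    MemLp (fun z : ℝ => (Real.exp (-p * z ^ 2) : ℂ)) 2 (rpowMeasure a) := by
  have hcont : Continuous fun z : ℝ => (Real.exp (-p * z ^ 2) : ℂ) := by fun_prop
  rw [memLp_two_iff_integrable_sq_norm hcont.aestronglyMeasurable]
  refine (integrable_exp_neg_mul_sq_rpowMeasure ha (mul_pos two_pos hp)).congr
    (ae_of_all _ fun z => ?_)
  beta_reduce
  rw [Complex.norm_real, Real.norm_eq_abs, Real.abs_exp, ← Real.exp_nat_mul]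
  push_cast
  ring_nf

/-- The Gaussian `e^{-pz²}` as an element of `L²(z^a dz)`. -/
def gaussianLp (ha : -1 < a) (p : Set.Ioi (0 : ℝ)) : Lp ℂ 2 (rpowMeasure a) :=
  (memLp_ofReal_exp_neg_mul_sq ha p.2).toLp _

lemma coeFn_gaussianLp (ha : -1 < a) (p : Set.Ioi (0 : ℝ)) :
    gaussianLp ha p =ᵐ[rpowMeasure a] fun z => (Real.exp (-p * z ^ 2) : ℂ) :=
  (memLp_ofReal_exp_neg_mul_sq ha p.2).coeFn_toLp

lemma inner_gaussianLp_left (ha : -1 < a) (p : Set.Ioi (0 : ℝ)) (f : Lp ℂ 2 (rpowMeasure a)) :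
    inner ℂ (gaussianLp ha p) f = ∫ z, Real.exp (-p * z ^ 2) • f z ∂rpowMeasure a := by
  rw [L2.inner_def]
  refine integral_congr_ae ((coeFn_gaussianLp ha p).mono fun z hz => ?_)
  simp only [hz, RCLike.inner_apply, Complex.conj_ofReal, Complex.real_smul, mul_comm]

lemma inner_gaussianLp_gaussianLp (ha : -1 < a) (p q : Set.Ioi (0 : ℝ)) :
    inner ℂ (gaussianLp ha p) (gaussianLp ha q)
      = ((p + q : ℝ) ^ (-((a + 1) / 2)) / 2 * Real.Gamma ((a - 1) / 2 + 1) : ℝ) := by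
  rw [inner_gaussianLp_left, ← integral_exp_neg_mul_sq_rpowMeasure ha (add_pos p.2 q.2),
    ← integral_complex_ofReal]
  refine integral_congr_ae ((coeFn_gaussianLp ha q).mono fun z hz => ?_)
  simp only [hz, Complex.real_smul, ← Complex.ofReal_mul, ← Real.exp_add, neg_add, add_mul]

lemma integrable_exp_neg_mul_sq_smul (ha : -1 < a) {p : ℝ} (hp : 0 < p)
    (f : Lp ℂ 2 (rpowMeasure a)) :
    Integrable (fun z => Real.exp (-p * z ^ 2) • f z) (rpowMeasure a) := by
  simp only [Complex.real_smul]
  exact (memLp_ofReal_exp_neg_mul_sq ha hp).integrable_mul (Lp.memLp f)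

lemma dense_span_gaussianLp (ha : -1 < a) :
    Dense (Submodule.span ℂ (Set.range (gaussianLp ha)) : Set (Lp ℂ 2 (rpowMeasure a))) := by
  rw [Submodule.dense_iff_topologicalClosure_eq_top, Submodule.topologicalClosure_eq_top_iff,
    Submodule.eq_bot_iff]
  refine fun f hf => Lp.eq_zero_iff_ae_eq_zero.2 <|
    ae_eq_zero_of_integral_exp_neg_mul_sq_smul_eq_zero (ae_rpowMeasure_pos a)
      (by simpa using integrable_exp_neg_mul_sq_smul ha one_pos f) fun p hp => ?_
  rw [← inner_gaussianLp_left ha ⟨p, hp⟩]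
  exact (Submodule.mem_orthogonal _ f).1 hf _ (Submodule.subset_span ⟨_, rfl⟩)

end GaussianLp

section HankelKernel

variable {a : ℝ}

/-- The kernel `x^{-ν} J_ν(x)`, `ν = (a - 1) / 2`, of the Hankel transform on `L²(z^a dz)`, written
through the Bessel–Clifford function so that it is defined and continuous on all of `ℝ`. -/
def hankelKernel (a x : ℝ) : ℝ :=
  2 ^ (-((a - 1) / 2)) * besselClifford ((a - 1) / 2) (-(x ^ 2 / 4))

lemma continuous_hankelKernel (a : ℝ) : Continuous (hankelKernel a) :=
  continuous_const.mul ((continuous_besselClifford _).comp (by fun_prop))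

lemma exists_abs_hankelKernel_mul_le (ha : -2 ≤ a) :
    ∃ C, ∀ z ζ, |hankelKernel a (z * ζ)| ≤ C * ((1 + z ^ 2) * (1 + ζ ^ 2)) := by
  obtain ⟨C, hC⟩ := exists_abs_besselClifford_neg_le (ν := (a - 1) / 2) (by linarith)
  have hC0 : 0 ≤ C := by simpa using (abs_nonneg _).trans (hC 0 le_rfl)
  refine ⟨2 ^ (-((a - 1) / 2)) * C, fun z ζ => ?_⟩
  have hle : 1 + (z * ζ) ^ 2 / 4 ≤ (1 + z ^ 2) * (1 + ζ ^ 2) := by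
    nlinarith [sq_nonneg z, sq_nonneg ζ, sq_nonneg (z * ζ)]
  rw [hankelKernel, abs_mul, abs_of_pos (by positivity), mul_assoc]
  gcongr
  exact (hC _ (by positivity)).trans (by gcongr)

lemma integral_hankelKernel_mul_exp_neg_mul_sq (ha : -1 < a) {p : ℝ} (hp : 0 < p) (z : ℝ) :
    ∫ ζ, hankelKernel a (z * ζ) * Real.exp (-p * ζ ^ 2) ∂rpowMeasure a
      = (2 * p) ^ (-((a + 1) / 2)) * Real.exp (-(4 * p)⁻¹ * z ^ 2) := by
  have hkernel (ζ : ℝ) : hankelKernel a (z * ζ) * Real.exp (-p * ζ ^ 2)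
      = 2 ^ (-((a - 1) / 2)) *
        (besselClifford ((a - 1) / 2) (-(z ^ 2 / 4) * ζ ^ 2) * Real.exp (-p * ζ ^ 2)) := by
    rw [hankelKernel, mul_assoc]
    ring_nf
  have htwo : (2 : ℝ) ^ (-((a + 1) / 2)) = 2 ^ (-((a - 1) / 2)) / 2 := by
    rw [← Real.rpow_sub_one two_ne_zero]
    ring_nf
  simp only [hkernel]
  rw [integral_const_mul, integral_besselClifford_mul_exp_neg_mul_sq ha hp,
    Real.mul_rpow zero_le_two hp.le, htwo, show -(z ^ 2 / 4) / p = -(4 * p)⁻¹ * z ^ 2 by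
      rw [mul_inv]; ring]
  ring

end HankelKernel

section Hankel

variable {a : ℝ}

/-- The Hankel transform of order `(a - 1) / 2` on `L²(z^a dz)`. -/
def hankel (a : ℝ) (f : ℝ → ℂ) (z : ℝ) : ℂ := ∫ ζ, hankelKernel a (z * ζ) • f ζ ∂rpowMeasure a

/-- The Hankel transform of `gaussianLp ha p`, as given by Weber's integral. -/
def hankelGaussianLp (ha : -1 < a) (p : Set.Ioi (0 : ℝ)) : Lp ℂ 2 (rpowMeasure a) :=
  (((2 * p : ℝ) ^ (-((a + 1) / 2)) : ℝ) : ℂ) •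
    gaussianLp ha ⟨(4 * p : ℝ)⁻¹, Set.mem_Ioi.2 (inv_pos.2 (mul_pos four_pos p.2))⟩

lemma inner_hankelGaussianLp_left (ha : -1 < a) (p : Set.Ioi (0 : ℝ))
    (f : Lp ℂ 2 (rpowMeasure a)) :
    inner ℂ (hankelGaussianLp ha p) f
      = ∫ ζ, ((2 * p) ^ (-((a + 1) / 2)) * Real.exp (-(4 * p : ℝ)⁻¹ * ζ ^ 2)) • f ζ
          ∂rpowMeasure a := by
  simp only [hankelGaussianLp, inner_smul_left, Complex.conj_ofReal, inner_gaussianLp_left,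
    mul_smul, integral_smul, ← Complex.real_smul]

lemma inner_hankelGaussianLp_hankelGaussianLp (ha : -1 < a) (p q : Set.Ioi (0 : ℝ)) :
    inner ℂ (hankelGaussianLp ha p) (hankelGaussianLp ha q)
      = inner ℂ (gaussianLp ha p) (gaussianLp ha q) := by
  have hp : (0 : ℝ) < p := p.2
  have hq : (0 : ℝ) < q := q.2
  have hpow : (p + q : ℝ) ^ (-((a + 1) / 2)) = (2 * p : ℝ) ^ (-((a + 1) / 2)) *
      (2 * q : ℝ) ^ (-((a + 1) / 2)) * ((4 * p : ℝ)⁻¹ + (4 * q : ℝ)⁻¹) ^ (-((a + 1) / 2)) := by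
    rw [← Real.mul_rpow (by positivity) (by positivity),
      ← Real.mul_rpow (by positivity) (by positivity)]
    congr 1
    field_simp
    ring
  simp only [hankelGaussianLp, inner_smul_left, inner_smul_right, Complex.conj_ofReal,
    inner_gaussianLp_gaussianLp, hpow]
  push_cast
  ring

lemma inner_gaussianLp_hankelGaussianLp (ha : -1 < a) (p q : Set.Ioi (0 : ℝ)) :
    inner ℂ (gaussianLp ha p) (hankelGaussianLp ha q)
      = inner ℂ (hankelGaussianLp ha p) (gaussianLp ha q) := by
  have hp : (0 : ℝ) < p := p.2
  have hq : (0 : ℝ) < q := q.2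
  have hpow : (2 * q : ℝ) ^ (-((a + 1) / 2)) * (p + (4 * q : ℝ)⁻¹) ^ (-((a + 1) / 2))
      = (2 * p : ℝ) ^ (-((a + 1) / 2)) * ((4 * p : ℝ)⁻¹ + q) ^ (-((a + 1) / 2)) := by
    rw [← Real.mul_rpow (by positivity) (by positivity),
      ← Real.mul_rpow (by positivity) (by positivity)]
    congr 1
    field_simp
    ring
  simp only [hankelGaussianLp, inner_smul_left, inner_smul_right, Complex.conj_ofReal,
    inner_gaussianLp_gaussianLp, ← Complex.ofReal_mul, ← mul_assoc, ← mul_div_assoc, hpow]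

lemma exists_linearIsometry_inner_gaussianLp_eq (ha : -1 < a) :
    ∃ U : Lp ℂ 2 (rpowMeasure a) →ₗᵢ[ℂ] Lp ℂ 2 (rpowMeasure a), ∀ p f,
      inner ℂ (gaussianLp ha p) (U f) = inner ℂ (hankelGaussianLp ha p) f := by
  obtain ⟨U, hU⟩ := exists_linearIsometry_of_inner_eq (dense_span_gaussianLp ha)
    (B := hankelGaussianLp ha) fun p q => (inner_hankelGaussianLp_hankelGaussianLp ha p q).symm
  refine ⟨U, fun p => inner_apply_eq_of_inner_apply_eq (dense_span_gaussianLp ha)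
    (U := U.toContinuousLinearMap) fun q => ?_⟩
  rw [LinearIsometry.coe_toContinuousLinearMap, hU, inner_gaussianLp_hankelGaussianLp]

lemma integrable_prod_exp_neg_mul_sq_smul_hankelKernel (ha : -1 < a) {p : ℝ} (hp : 0 < p)
    {f : ℝ → ℂ} (hf : Integrable (fun ζ => (1 + ζ ^ 2) • f ζ) (rpowMeasure a)) :
    Integrable (fun x : ℝ × ℝ => Real.exp (-p * x.1 ^ 2) • hankelKernel a (x.1 * x.2) • f x.2)
      ((rpowMeasure a).prod (rpowMeasure a)) := by
  obtain ⟨C, hC⟩ := exists_abs_hankelKernel_mul_le (a := a) (by linarith)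
  have hgauss : Integrable (fun z : ℝ => C * ((1 + z ^ 2) * Real.exp (-p * z ^ 2)))
      (rpowMeasure a) := by
    refine (((integrable_exp_neg_mul_sq_rpowMeasure ha hp).add
      (integrable_pow_mul_exp_neg_mul_sq ha hp 2)).congr (ae_of_all _ fun z => ?_)).const_mul C
    simp only [Pi.add_apply, add_mul, one_mul]
  have hmeas : AEStronglyMeasurable f (rpowMeasure a) := by
    have hinv : Continuous fun ζ : ℝ => (1 + ζ ^ 2)⁻¹ :=
      Continuous.inv₀ (by fun_prop) fun ζ => by positivity
    refine (hinv.aestronglyMeasurable.smul hf.1).congr (ae_of_all _ fun ζ => ?_)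
    exact inv_smul_smul₀ (by positivity : 1 + ζ ^ 2 ≠ 0) (f ζ)
  refine (hgauss.mul_prod hf.norm).mono' ?_ (ae_of_all _ fun x => ?_)
  · have hkernel : Continuous fun x : ℝ × ℝ => hankelKernel a (x.1 * x.2) :=
      (continuous_hankelKernel a).comp (by fun_prop)
    have hexp : Continuous fun x : ℝ × ℝ => Real.exp (-p * x.1 ^ 2) := by fun_prop
    exact hexp.aestronglyMeasurable.smul (hkernel.aestronglyMeasurable.smul hmeas.comp_snd)
  · simp only [norm_smul, Real.norm_eq_abs, Real.abs_exp]
    rw [abs_of_pos (show 0 < 1 + x.2 ^ 2 by positivity)]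
    calc Real.exp (-p * x.1 ^ 2) * (|hankelKernel a (x.1 * x.2)| * ‖f x.2‖)
        ≤ Real.exp (-p * x.1 ^ 2) * (C * ((1 + x.1 ^ 2) * (1 + x.2 ^ 2)) * ‖f x.2‖) := by
          gcongr
          exact hC _ _
      _ = C * ((1 + x.1 ^ 2) * Real.exp (-p * x.1 ^ 2)) * ((1 + x.2 ^ 2) * ‖f x.2‖) := by ring

lemma integrable_exp_neg_mul_sq_smul_hankel (ha : -1 < a) {p : ℝ} (hp : 0 < p) {f : ℝ → ℂ}
    (hf : Integrable (fun ζ => (1 + ζ ^ 2) • f ζ) (rpowMeasure a)) :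
    Integrable (fun z => Real.exp (-p * z ^ 2) • hankel a f z) (rpowMeasure a) := by
  simpa only [hankel, integral_smul] using
    (integrable_prod_exp_neg_mul_sq_smul_hankelKernel ha hp hf).integral_prod_left

lemma integral_exp_neg_mul_sq_smul_hankel (ha : -1 < a) {p : ℝ} (hp : 0 < p) {f : ℝ → ℂ}
    (hf : Integrable (fun ζ => (1 + ζ ^ 2) • f ζ) (rpowMeasure a)) :
    ∫ z, Real.exp (-p * z ^ 2) • hankel a f z ∂rpowMeasure a
      = ∫ ζ, ((2 * p) ^ (-((a + 1) / 2)) * Real.exp (-(4 * p)⁻¹ * ζ ^ 2)) • f ζ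
          ∂rpowMeasure a := by
  simp only [hankel, ← integral_smul]
  rw [integral_integral_swap (integrable_prod_exp_neg_mul_sq_smul_hankelKernel ha hp hf)]
  refine integral_congr_ae (ae_of_all _ fun ζ => ?_)
  beta_reduce
  rw [← integral_hankelKernel_mul_exp_neg_mul_sq ha hp ζ, ← integral_smul_const]
  simp only [smul_smul, mul_comm]

theorem lintegral_enorm_sq_hankel (ha : -1 < a) {f : ℝ → ℂ} (hf₂ : MemLp f 2 (rpowMeasure a))
    (hf₁ : Integrable (fun ζ => (1 + ζ ^ 2) • f ζ) (rpowMeasure a)) :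
    ∫⁻ z, ‖hankel a f z‖ₑ ^ 2 ∂rpowMeasure a = ∫⁻ z, ‖f z‖ₑ ^ 2 ∂rpowMeasure a := by
  obtain ⟨U, hU⟩ := exists_linearIsometry_inner_gaussianLp_eq ha
  set g := hf₂.toLp f
  have hint {p : ℝ} (hp : 0 < p) := integrable_exp_neg_mul_sq_smul_hankel ha hp hf₁
  have hUint {p : ℝ} (hp : 0 < p) := integrable_exp_neg_mul_sq_smul ha hp (U g)
  have hgauss (p : ℝ) (hp : 0 < p) :
      ∫ z, Real.exp (-p * z ^ 2) • hankel a f z ∂rpowMeasure a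
        = ∫ z, Real.exp (-p * z ^ 2) • U g z ∂rpowMeasure a := by
    rw [integral_exp_neg_mul_sq_smul_hankel ha hp hf₁, ← inner_gaussianLp_left ha ⟨p, hp⟩, hU,
      inner_hankelGaussianLp_left]
    exact integral_congr_ae (hf₂.coeFn_toLp.mono fun ζ hζ => congrArg _ hζ.symm)
  have heq : hankel a f =ᵐ[rpowMeasure a] U g := by
    refine (sub_ae_eq_zero _ _).1 (ae_eq_zero_of_integral_exp_neg_mul_sq_smul_eq_zero
      (ae_rpowMeasure_pos a) ?_ fun p hp => ?_)
    · simpa only [Pi.sub_def, smul_sub, neg_mul, one_mul] using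
        (hint one_pos).sub (hUint one_pos)
    · simp only [Pi.sub_apply, smul_sub]
      rw [integral_sub (hint hp) (hUint hp), hgauss p hp, sub_self]
  rw [lintegral_enorm_sq_eq_eLpNorm_sq, lintegral_enorm_sq_eq_eLpNorm_sq, eLpNorm_congr_ae heq,
    ← eLpNorm_congr_ae hf₂.coeFn_toLp, ← Lp.enorm_def, ← Lp.enorm_def, U.enorm_map]

end Hankel

section FourierPi

variable {ι : Type*} [Fintype ι]

lemma fourier_toLp_eq (φ : SchwartzMap (ι → ℝ) ℂ) (ξ : ι → ℝ) :
    𝓕 (SchwartzMap.compCLMOfContinuousLinearEquiv ℂ (EuclideanSpace.equiv ι ℝ) φ) (WithLp.toLp 2 ξ)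
      = ∫ y, 𝐞 (-(ξ ⬝ᵥ y)) • φ y := by
  rw [SchwartzMap.fourier_coe, Real.fourier_eq, ← (PiLp.volume_preserving_toLp ι).integral_comp
    (MeasurableEquiv.toLp 2 (ι → ℝ)).measurableEmbedding]
  simp only [EuclideanSpace.inner_toLp_toLp, star_trivial]
  rfl

theorem lintegral_enorm_sq_fourier_pi (φ : SchwartzMap (ι → ℝ) ℂ) :
    ∫⁻ ξ, ‖∫ y, 𝐞 (-(ξ ⬝ᵥ y)) • φ y‖ₑ ^ 2 = ∫⁻ y, ‖φ y‖ₑ ^ 2 := by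
  set ψ := SchwartzMap.compCLMOfContinuousLinearEquiv ℂ (EuclideanSpace.equiv ι ℝ) φ with hψ
  have hplancherel : ∫⁻ v, ‖𝓕 ψ v‖ₑ ^ 2 = ∫⁻ v, ‖ψ v‖ₑ ^ 2 := by
    rw [lintegral_enorm_sq_eq_eLpNorm_sq, lintegral_enorm_sq_eq_eLpNorm_sq,
      ← Lp.enorm_toLp ((𝓕 ψ).memLp 2 volume),
      ← Lp.enorm_toLp (ψ.memLp 2 volume)]
    exact congrArg (· ^ 2) (enorm_eq_iff_norm_eq.2 ψ.norm_fourier_toL2_eq)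
  have hcomp (g : EuclideanSpace ℝ ι → ℝ≥0∞) : ∫⁻ y, g (WithLp.toLp 2 y) = ∫⁻ v, g v :=
    (PiLp.volume_preserving_toLp ι).lintegral_comp_emb
      (MeasurableEquiv.toLp 2 (ι → ℝ)).measurableEmbedding g
  simp only [← fourier_toLp_eq, ← hψ]
  rw [hcomp fun v => ‖𝓕 ψ v‖ₑ ^ 2, hplancherel, ← hcomp]
  rfl

end FourierPi

section SchwartzProd

variable {E F V : Type*} [NormedAddCommGroup E] [NormedSpace ℝ E] [NormedAddCommGroup F]
  [NormedSpace ℝ F] [NormedAddCommGroup V] [NormedSpace ℝ V]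

lemma exists_norm_schwartzMap_prod_le (u : SchwartzMap (E × F) V) (N M : ℕ) :
    ∃ C, ∀ y ζ, ‖u (y, ζ)‖ ≤ C * (((1 + ‖y‖) ^ N)⁻¹ * ((1 + ‖ζ‖) ^ M)⁻¹) := by
  refine ⟨2 ^ (N + M) * ((Finset.Iic (N + M, 0)).sup fun m => SchwartzMap.seminorm ℝ m.1 m.2) u,
    fun y ζ => ?_⟩
  have h := SchwartzMap.one_add_le_sup_seminorm_apply (𝕜 := ℝ) (m := (N + M, 0)) le_rfl le_rfl u
    (y, ζ)
  rw [norm_iteratedFDeriv_zero, pow_add] at h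
  rw [← mul_inv, ← div_eq_mul_inv, le_div_iff₀' (by positivity)]
  refine le_trans ?_ h
  gcongr
  exacts [norm_fst_le (y, ζ), norm_snd_le (y, ζ)]

lemma exists_schwartzMap_eq_slice (u : SchwartzMap (E × F) V) (ζ : F) :
    ∃ φ : SchwartzMap E V, ∀ y, φ y = u (y, ζ) := by
  have hg : Function.HasTemperateGrowth fun y : E => (y, ζ) := by
    simpa [Pi.add_def] using (ContinuousLinearMap.inl ℝ E F).hasTemperateGrowth.add (.const (0, ζ))
  have hg' : AntilipschitzWith 1 fun y : E => (y, ζ) :=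
    AntilipschitzWith.of_le_mul_dist fun y y' => by simp [Prod.dist_eq]
  exact ⟨SchwartzMap.compCLMOfAntilipschitz ℝ hg hg' u, fun y => rfl⟩

lemma integrable_inv_one_add_norm_pow [MeasurableSpace E] [BorelSpace E] [FiniteDimensional ℝ E]
    (μ : Measure E) [μ.IsAddHaarMeasure] {N : ℕ} (hN : Module.finrank ℝ E < N) :
    Integrable (fun y => ((1 + ‖y‖) ^ N)⁻¹) μ := by
  refine (integrable_one_add_norm (μ := μ) (r := N) (by exact_mod_cast hN)).congr
    (ae_of_all _ fun y => ?_)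
  beta_reduce
  rw [Real.rpow_neg (by positivity), Real.rpow_natCast]

end SchwartzProd

section HankelDecay

variable {a : ℝ} {f : ℝ → ℂ}

lemma one_add_sq_mul_inv_pow_le (M : ℕ) (ζ : ℝ) :
    (1 + ζ ^ 2) * ((1 + |ζ|) ^ (M + 2))⁻¹ ≤ ((1 + |ζ|) ^ M)⁻¹ := by
  have hle : 1 + ζ ^ 2 ≤ (1 + |ζ|) ^ 2 := by
    rw [← sq_abs]
    nlinarith [abs_nonneg ζ]
  rw [pow_add, mul_inv, mul_left_comm]
  exact mul_le_of_le_one_right (by positivity) (mul_inv_le_one_of_le₀ hle (by positivity))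

theorem lintegral_enorm_sq_hankel_of_decay (ha : -1 < a)
    (hf : AEStronglyMeasurable f (rpowMeasure a))
    (hdecay : ∀ M : ℕ, ∃ C, ∀ ζ, ‖f ζ‖ ≤ C * ((1 + |ζ|) ^ M)⁻¹) :
    ∫⁻ z, ‖hankel a f z‖ₑ ^ 2 ∂rpowMeasure a = ∫⁻ z, ‖f z‖ₑ ^ 2 ∂rpowMeasure a := by
  obtain ⟨M, hM⟩ := exists_nat_gt (a + 1)
  obtain ⟨C, hC⟩ := hdecay M
  obtain ⟨D, hD⟩ := hdecay (M + 2)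
  have hint := integrable_inv_one_add_abs_pow ha hM
  have hD0 : 0 ≤ D := by simpa using (norm_nonneg _).trans (hD 0)
  refine lintegral_enorm_sq_hankel ha ?_ ?_
  · rw [memLp_two_iff_integrable_sq_norm hf]
    refine (hint.const_mul (C ^ 2)).mono' (hf.norm.pow 2) (ae_of_all _ fun ζ => ?_)
    rw [Real.norm_of_nonneg (by positivity)]
    calc ‖f ζ‖ ^ 2 ≤ (C * ((1 + |ζ|) ^ M)⁻¹) ^ 2 := by gcongr; exact hC ζ
      _ = C ^ 2 * ((1 + |ζ|) ^ M)⁻¹ ^ 2 := mul_pow _ _ _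
      _ ≤ C ^ 2 * ((1 + |ζ|) ^ M)⁻¹ := by
        gcongr
        refine pow_le_of_le_one (by positivity) (inv_le_one_of_one_le₀ (one_le_pow₀ ?_)) two_ne_zero
        exact le_add_of_nonneg_right (abs_nonneg ζ)
  · have hcont : Continuous fun ζ : ℝ => 1 + ζ ^ 2 := by fun_prop
    refine (hint.const_mul D).mono' (hcont.aestronglyMeasurable.smul hf) (ae_of_all _ fun ζ => ?_)
    rw [norm_smul, Real.norm_of_nonneg (by positivity)]
    calc (1 + ζ ^ 2) * ‖f ζ‖ ≤ (1 + ζ ^ 2) * (D * ((1 + |ζ|) ^ (M + 2))⁻¹) := by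
          gcongr
          exact hD ζ
      _ = D * ((1 + ζ ^ 2) * ((1 + |ζ|) ^ (M + 2))⁻¹) := mul_left_comm _ _ _
      _ ≤ D * ((1 + |ζ|) ^ M)⁻¹ := by
        gcongr
        exact one_add_sq_mul_inv_pow_le M ζ

end HankelDecay

section PartialFourier

variable {ι : Type*} [Fintype ι]

/-- The Fourier transform of `v` in its first variable. -/
def partialFourier (v : (ι → ℝ) × ℝ → ℂ) (ξ : ι → ℝ) (ζ : ℝ) : ℂ :=
  ∫ y, 𝐞 (-(ξ ⬝ᵥ y)) • v (y, ζ)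

lemma stronglyMeasurable_partialFourier {v : (ι → ℝ) × ℝ → ℂ} (hv : Continuous v) :
    StronglyMeasurable fun X : (ι → ℝ) × ℝ => partialFourier v X.1 X.2 := by
  have hcont : Continuous fun q : ((ι → ℝ) × ℝ) × (ι → ℝ) =>
      𝐞 (-(q.1.1 ⬝ᵥ q.2)) • v (q.2, q.1.2) := by fun_prop
  exact hcont.stronglyMeasurable.integral_prod_right

lemma exists_norm_partialFourier_le (u : SchwartzMap ((ι → ℝ) × ℝ) ℂ) (M : ℕ) :
    ∃ C, ∀ ξ ζ, ‖partialFourier u ξ ζ‖ ≤ C * ((1 + |ζ|) ^ M)⁻¹ := by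
  obtain ⟨C, hC⟩ := exists_norm_schwartzMap_prod_le u (Module.finrank ℝ (ι → ℝ) + 1) M
  refine ⟨C * ∫ y : ι → ℝ, ((1 + ‖y‖) ^ (Module.finrank ℝ (ι → ℝ) + 1))⁻¹, fun ξ ζ => ?_⟩
  rw [mul_assoc, ← integral_mul_const, ← integral_const_mul]
  refine norm_integral_le_of_norm_le (((integrable_inv_one_add_norm_pow volume
    (Nat.lt_succ_self _)).mul_const _).const_mul _) (ae_of_all _ fun y => ?_)
  rw [Circle.norm_smul]
  exact hC y ζ

lemma lintegral_enorm_sq_partialFourier (u : SchwartzMap ((ι → ℝ) × ℝ) ℂ) (ζ : ℝ) :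
    ∫⁻ ξ, ‖partialFourier u ξ ζ‖ₑ ^ 2 = ∫⁻ y, ‖u (y, ζ)‖ₑ ^ 2 := by
  obtain ⟨φ, hφ⟩ := exists_schwartzMap_eq_slice u ζ
  simpa only [hφ, partialFourier] using lintegral_enorm_sq_fourier_pi φ

end PartialFourier

section FourierHankel

variable {d : ℕ} {a : ℝ}

instance (d : ℕ) (a : ℝ) : SigmaFinite (ωa d a) :=
  inferInstanceAs (SigmaFinite (volume.prod (rpowMeasure a)))

lemma ωa_eq_prod (d : ℕ) (a : ℝ) : ωa d a = volume.prod (rpowMeasure a) := rfl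

lemma ae_ωa_snd_pos (d : ℕ) (a : ℝ) : ∀ᵐ X ∂ωa d a, 0 < X.2 :=
  Measure.quasiMeasurePreserving_snd.ae (ae_rpowMeasure_pos a)

lemma lintegral_ωa_comp_smul {r s : ℝ} (hr : r ≠ 0) (hs : 0 < s)
    {F : (Fin d → ℝ) × ℝ → ℝ≥0∞} (hF : Measurable F) :
    ∫⁻ X, F (r • X.1, s * X.2) ∂ωa d a
      = ENNReal.ofReal (|(r ^ d)⁻¹| * s ^ (-(a + 1))) * ∫⁻ X, F X ∂ωa d a := by
  rw [ωa_eq_prod, lintegral_prod _ (by fun_prop), lintegral_prod _ hF.aemeasurable]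
  have hinner (x : Fin d → ℝ) := lintegral_rpowMeasure_comp_mul a hs fun z => F (x, z)
  simp only [hinner]
  rw [lintegral_const_mul _ (by fun_prop),
    lintegral_comp_smul volume (fun x => ∫⁻ z, F (x, z) ∂rpowMeasure a) hr,
    Module.finrank_fin_fun, mul_comm |_|, ENNReal.ofReal_mul (by positivity), mul_assoc]

/-- The unitary transform of `L²(ω_a)` obtained by applying the Fourier transform in `x` and the
Hankel transform in `z`. -/
def fourierHankel (a : ℝ) (v : (Fin d → ℝ) × ℝ → ℂ) (X : (Fin d → ℝ) × ℝ) : ℂ :=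
  ∫ Y, hankelKernel a (X.2 * Y.2) • 𝐞 (-(X.1 ⬝ᵥ Y.1)) • v Y ∂ωa d a

lemma continuous_fourierHankel_integrand (a : ℝ) {v : (Fin d → ℝ) × ℝ → ℂ} (hv : Continuous v) :
    Continuous fun q : ((Fin d → ℝ) × ℝ) × ((Fin d → ℝ) × ℝ) =>
      hankelKernel a (q.1.2 * q.2.2) • 𝐞 (-(q.1.1 ⬝ᵥ q.2.1)) • v q.2 := by
  have hkernel := continuous_hankelKernel a
  fun_prop

lemma stronglyMeasurable_fourierHankel (a : ℝ) {v : (Fin d → ℝ) × ℝ → ℂ} (hv : Continuous v) :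
    StronglyMeasurable (fourierHankel a v) :=
  (continuous_fourierHankel_integrand a hv).stronglyMeasurable.integral_prod_right

lemma integrable_fourierHankel_integrand (ha : -1 < a) (u : SchwartzMap ((Fin d → ℝ) × ℝ) ℂ)
    (X : (Fin d → ℝ) × ℝ) :
    Integrable (fun Y => hankelKernel a (X.2 * Y.2) • 𝐞 (-(X.1 ⬝ᵥ Y.1)) • u Y) (ωa d a) := by
  obtain ⟨M, hM⟩ := exists_nat_gt (a + 1)
  obtain ⟨D, hD⟩ := exists_abs_hankelKernel_mul_le (a := a) (by linarith)
  obtain ⟨C, hC⟩ := exists_norm_schwartzMap_prod_le u (d + 1) (M + 2)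
  have hC0 : 0 ≤ C := by simpa using (norm_nonneg _).trans (hC 0 0)
  have hD0 : 0 ≤ D := by simpa using (abs_nonneg _).trans (hD 0 0)
  have hint := (integrable_inv_one_add_norm_pow (volume : Measure (Fin d → ℝ))
    (N := d + 1) (by simp)).mul_prod (integrable_inv_one_add_abs_pow ha hM)
  have hcont := (continuous_fourierHankel_integrand a u.continuous).comp
    (Continuous.prodMk_right X)
  refine (hint.const_mul (D * (1 + X.2 ^ 2) * C)).mono' hcont.aestronglyMeasurable
    (ae_of_all _ fun Y => ?_)
  rw [norm_smul, Circle.norm_smul, Real.norm_eq_abs]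
  calc |hankelKernel a (X.2 * Y.2)| * ‖u Y‖
      ≤ D * ((1 + X.2 ^ 2) * (1 + Y.2 ^ 2)) *
        (C * (((1 + ‖Y.1‖) ^ (d + 1))⁻¹ * ((1 + |Y.2|) ^ (M + 2))⁻¹)) := by
        gcongr
        exacts [hD _ _, hC _ _]
    _ = D * (1 + X.2 ^ 2) * C * (((1 + ‖Y.1‖) ^ (d + 1))⁻¹ *
        ((1 + Y.2 ^ 2) * ((1 + |Y.2|) ^ (M + 2))⁻¹)) := by ring
    _ ≤ D * (1 + X.2 ^ 2) * C * (((1 + ‖Y.1‖) ^ (d + 1))⁻¹ * ((1 + |Y.2|) ^ M)⁻¹) := by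
        gcongr
        exact one_add_sq_mul_inv_pow_le M Y.2

lemma fourierHankel_eq_hankel_partialFourier (ha : -1 < a)
    (u : SchwartzMap ((Fin d → ℝ) × ℝ) ℂ) (X : (Fin d → ℝ) × ℝ) :
    fourierHankel a u X = hankel a (partialFourier u X.1) X.2 := by
  have hint := integrable_fourierHankel_integrand ha u X
  rw [ωa_eq_prod] at hint
  rw [fourierHankel, ωa_eq_prod, integral_prod_symm _ hint]
  simp only [hankel, partialFourier, integral_smul]

theorem lintegral_enorm_sq_fourierHankel (ha : -1 < a) (u : SchwartzMap ((Fin d → ℝ) × ℝ) ℂ) :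
    ∫⁻ X, ‖fourierHankel a u X‖ₑ ^ 2 ∂ωa d a = ∫⁻ X, ‖u X‖ₑ ^ 2 ∂ωa d a := by
  have hT : Measurable fun X => ‖fourierHankel a u X‖ₑ ^ 2 :=
    (stronglyMeasurable_fourierHankel a u.continuous).measurable.enorm.pow_const 2
  have hP := stronglyMeasurable_partialFourier u.continuous
  have hhankel (ξ : Fin d → ℝ) :
      ∫⁻ z, ‖fourierHankel a u (ξ, z)‖ₑ ^ 2 ∂rpowMeasure a
        = ∫⁻ ζ, ‖partialFourier u ξ ζ‖ₑ ^ 2 ∂rpowMeasure a := by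
    simp only [fourierHankel_eq_hankel_partialFourier ha]
    refine lintegral_enorm_sq_hankel_of_decay ha
      (hP.comp_measurable measurable_prodMk_left).aestronglyMeasurable fun M => ?_
    obtain ⟨C, hC⟩ := exists_norm_partialFourier_le u M
    exact ⟨C, hC ξ⟩
  calc ∫⁻ X, ‖fourierHankel a u X‖ₑ ^ 2 ∂ωa d a
      = ∫⁻ ξ, ∫⁻ ζ, ‖partialFourier u ξ ζ‖ₑ ^ 2 ∂rpowMeasure a := by
        rw [ωa_eq_prod, lintegral_prod _ hT.aemeasurable]
        simp only [hhankel]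
    _ = ∫⁻ ζ, (∫⁻ y, ‖u (y, ζ)‖ₑ ^ 2) ∂rpowMeasure a := by
        rw [lintegral_lintegral_swap (hP.measurable.enorm.pow_const 2).aemeasurable]
        simp only [lintegral_enorm_sq_partialFourier]
    _ = ∫⁻ X, ‖u X‖ₑ ^ 2 ∂ωa d a := by
        rw [ωa_eq_prod, lintegral_prod_symm _
          (u.continuous.measurable.enorm.pow_const 2).aemeasurable]

end FourierHankel

section Chirp

variable {d : ℕ}

lemma iteratedDeriv_cexp_ofReal_mul_I (n : ℕ) :
    iteratedDeriv n (fun s : ℝ => cexp (s * I)) = fun s : ℝ => I ^ n * cexp (s * I) := by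
  induction n with
  | zero => simp
  | succ n ih =>
    rw [iteratedDeriv_succ, ih]
    funext s
    have hderiv : HasDerivAt (fun s : ℝ => cexp (s * I)) (cexp (s * I) * I) s := by
      simpa using ((hasDerivAt_id s).ofReal_comp.mul_const I).cexp
    rw [(hderiv.const_mul (I ^ n)).deriv]
    ring

lemma hasTemperateGrowth_cexp_ofReal_mul_I :
    Function.HasTemperateGrowth fun s : ℝ => cexp (s * I) := by
  refine ⟨(ofRealCLM.contDiff.mul contDiff_const).cexp, fun n => ⟨0, 1, fun s => ?_⟩⟩
  rw [norm_iteratedFDeriv_eq_norm_iteratedDeriv, iteratedDeriv_cexp_ofReal_mul_I]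
  simp [norm_exp_ofReal_mul_I]

/-- The quadratic phase `exp (i|X|² / (4t))`, with `|X|` the Euclidean norm (which is not the norm
of the product type). -/
def chirp (t : ℝ) (X : (Fin d → ℝ) × ℝ) : ℂ :=
  cexp ((((∑ i, X.1 i ^ 2) + X.2 ^ 2) / (4 * t) : ℝ) * I)

lemma enorm_chirp (t : ℝ) (X : (Fin d → ℝ) × ℝ) : ‖chirp t X‖ₑ = 1 := by
  rw [← ofReal_norm, chirp, norm_exp_ofReal_mul_I, ENNReal.ofReal_one]

lemma hasTemperateGrowth_chirp (t : ℝ) :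
    Function.HasTemperateGrowth (chirp t : (Fin d → ℝ) × ℝ → ℂ) := by
  have hcoord (i : Fin d) : Function.HasTemperateGrowth fun X : (Fin d → ℝ) × ℝ => X.1 i :=
    (ContinuousLinearMap.proj (R := ℝ) (φ := fun _ => ℝ) i ∘L
      ContinuousLinearMap.fst ℝ (Fin d → ℝ) ℝ).hasTemperateGrowth
  have hsnd : Function.HasTemperateGrowth fun X : (Fin d → ℝ) × ℝ => X.2 :=
    (ContinuousLinearMap.snd ℝ (Fin d → ℝ) ℝ).hasTemperateGrowth
  have hphase : Function.HasTemperateGrowth fun X : (Fin d → ℝ) × ℝ =>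
      ((∑ i, X.1 i ^ 2) + X.2 ^ 2) / (4 * t) := by
    simp only [div_eq_mul_inv, sq]
    fun_prop
  exact hasTemperateGrowth_cexp_ofReal_mul_I.comp hphase

lemma exists_schwartzMap_eq_chirp_mul (t : ℝ) (u : SchwartzMap ((Fin d → ℝ) × ℝ) ℂ) :
    ∃ v : SchwartzMap ((Fin d → ℝ) × ℝ) ℂ, ∀ X, v X = chirp t X * u X :=
  ⟨SchwartzMap.smulLeftCLM ℂ (chirp t) u, fun X => by
    rw [SchwartzMap.smulLeftCLM_apply_apply (hasTemperateGrowth_chirp t), smul_eq_mul]⟩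

end Chirp

section KernelFactorization

variable {d : ℕ} {a t : ℝ}

lemma SaK_eq_hankelKernel {z ζ : ℝ} (ht : t ≠ 0) (hz : 0 < z) (hζ : 0 < ζ) :
    SaK a z ζ t = cexp (-I * (Real.sign t : ℂ) * (((a + 1) * Real.pi / 4 : ℝ) : ℂ)) /
      (((2 * |t|) ^ ((a + 1) / 2) : ℝ) : ℂ) *
      (hankelKernel a ((2 * |t|)⁻¹ * z * ζ) : ℂ) * cexp (((z ^ 2 + ζ ^ 2) / (4 * t) : ℝ) * I) := by
  have hx : 0 < z * ζ / (2 * |t|) := by positivity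
  have hbessel := rpow_neg_mul_besselJ ((a - 1) / 2) hx
  rw [← neg_div, neg_sub] at hbessel
  have harg : (2 * |t|)⁻¹ * z * ζ = z * ζ / (2 * |t|) := by ring
  rw [SaK, hankelKernel, harg, ← neg_div, neg_sub, ← hbessel]
  push_cast
  ring_nf

lemma Sfree_eq_fourierChar (ht : t ≠ 0) (x y : Fin d → ℝ) :
    Sfree d x y t = (4 * (Real.pi : ℂ) * I * (t : ℂ)) ^ (-(d : ℂ) / 2) *
      (𝐞 (-(((4 * Real.pi * t)⁻¹ • x) ⬝ᵥ y)) : ℂ) *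
      cexp ((((∑ i, x i ^ 2) + ∑ i, y i ^ 2) / (4 * t) : ℝ) * I) := by
  have hsq : ∑ i, (x i - y i) ^ 2 = (∑ i, x i ^ 2) + (∑ i, y i ^ 2) - 2 * (x ⬝ᵥ y) := by
    simp only [dotProduct, Finset.mul_sum, ← Finset.sum_add_distrib, ← Finset.sum_sub_distrib]
    exact Finset.sum_congr rfl fun i _ => by ring
  have hpi : (Real.pi : ℂ) ≠ 0 := by exact_mod_cast Real.pi_ne_zero
  have htC : (t : ℂ) ≠ 0 := by exact_mod_cast ht
  rw [Sfree, Real.fourierChar_apply, mul_assoc (_ ^ _), ← Complex.exp_add, hsq, smul_dotProduct,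
    smul_eq_mul]
  congr 2
  push_cast
  field_simp
  ring

/-- The constant left over when the quadratic phases and the kernel of the (dilated)
Fourier–Hankel transform are split off the kernel `SK d a X Y t`. -/
def kernelConst (d : ℕ) (a t : ℝ) : ℂ :=
  (4 * (Real.pi : ℂ) * I * (t : ℂ)) ^ (-(d : ℂ) / 2) *
    (cexp (-I * (Real.sign t : ℂ) * (((a + 1) * Real.pi / 4 : ℝ) : ℂ)) /
      (((2 * |t|) ^ ((a + 1) / 2) : ℝ) : ℂ))

lemma norm_kernelConst_sq (d : ℕ) (a : ℝ) (ht : t ≠ 0) :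
    ‖kernelConst d a t‖ ^ 2 = ((4 * Real.pi * |t|) ^ d)⁻¹ * ((2 * |t|) ^ (a + 1))⁻¹ := by
  have hbase : 4 * (Real.pi : ℂ) * I * (t : ℂ) ≠ 0 := by simp [Real.pi_ne_zero, ht]
  have hnorm : ‖4 * (Real.pi : ℂ) * I * (t : ℂ)‖ = 4 * Real.pi * |t| := by
    simp [abs_of_pos Real.pi_pos]
  have hexponent : -(d : ℂ) / 2 = ((-(d : ℝ) / 2 : ℝ) : ℂ) := by push_cast; ring
  have hphase : -I * (Real.sign t : ℂ) * (((a + 1) * Real.pi / 4 : ℝ) : ℂ)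
      = ((-(Real.sign t * ((a + 1) * Real.pi / 4)) : ℝ) : ℂ) * I := by push_cast; ring
  have hpos : 0 < 4 * Real.pi * |t| := by positivity
  have hpos' : 0 < 2 * |t| := by positivity
  have hfree : ‖(4 * (Real.pi : ℂ) * I * (t : ℂ)) ^ (-(d : ℂ) / 2)‖ ^ 2
      = ((4 * Real.pi * |t|) ^ d)⁻¹ := by
    rw [norm_cpow_of_ne_zero hbase, hnorm, hexponent, ofReal_re, ofReal_im, mul_zero, Real.exp_zero,
      div_one, ← Real.rpow_mul_natCast hpos.le, Nat.cast_ofNat, div_mul_cancel₀ _ two_ne_zero,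
      Real.rpow_neg hpos.le, Real.rpow_natCast]
  have hbessel : (((2 * |t|) ^ ((a + 1) / 2)) ^ 2) = (2 * |t|) ^ (a + 1) := by
    rw [← Real.rpow_mul_natCast hpos'.le, Nat.cast_ofNat, div_mul_cancel₀ _ two_ne_zero]
  rw [kernelConst, norm_mul, mul_pow, hfree, norm_div, hphase, norm_exp_ofReal_mul_I, norm_real,
    div_pow, one_pow, one_div, Real.norm_eq_abs, sq_abs, hbessel]

/-- The dilation `(x, z) ↦ (x / (4πt), z / (2|t|))`, giving the frequency at which the propagator at
time `t` evaluates the Fourier–Hankel transform. -/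
def frequencyScale (t : ℝ) (X : (Fin d → ℝ) × ℝ) : (Fin d → ℝ) × ℝ :=
  ((4 * Real.pi * t)⁻¹ • X.1, (2 * |t|)⁻¹ * X.2)

lemma SK_eq_chirp_mul_fourierHankel_kernel (ht : t ≠ 0) {X Y : (Fin d → ℝ) × ℝ} (hX : 0 < X.2)
    (hY : 0 < Y.2) (w : ℂ) :
    SK d a X Y t * w = kernelConst d a t * chirp t X *
      (hankelKernel a ((frequencyScale t X).2 * Y.2) •
        𝐞 (-((frequencyScale t X).1 ⬝ᵥ Y.1)) • (chirp t Y * w)) := by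
  have hphase : cexp (((X.2 ^ 2 + Y.2 ^ 2) / (4 * t) : ℝ) * I) *
      cexp ((((∑ i, X.1 i ^ 2) + ∑ i, Y.1 i ^ 2) / (4 * t) : ℝ) * I) = chirp t X * chirp t Y := by
    rw [chirp, chirp, ← Complex.exp_add, ← Complex.exp_add]
    congr 1
    push_cast
    ring
  rw [SK, SaK_eq_hankelKernel ht hX hY, Sfree_eq_fourierChar ht, kernelConst, frequencyScale,
    Circle.smul_def, real_smul, smul_eq_mul]
  linear_combination (4 * (Real.pi : ℂ) * I * (t : ℂ)) ^ (-(d : ℂ) / 2) *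
    (cexp (-I * (Real.sign t : ℂ) * (((a + 1) * Real.pi / 4 : ℝ) : ℂ)) /
      (((2 * |t|) ^ ((a + 1) / 2) : ℝ) : ℂ)) * (hankelKernel a ((2 * |t|)⁻¹ * X.2 * Y.2) : ℂ) *
    (𝐞 (-(((4 * Real.pi * t)⁻¹ • X.1) ⬝ᵥ Y.1)) : ℂ) * w * hphase

end KernelFactorization

section Propagator

variable {d : ℕ} {a t : ℝ}

lemma SK_mul_ae_eq (ht : t ≠ 0) {X : (Fin d → ℝ) × ℝ} (hX : 0 < X.2)
    {u v : (Fin d → ℝ) × ℝ → ℂ} (hv : ∀ Y, v Y = chirp t Y * u Y) :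
    (fun Y => SK d a X Y t * u Y) =ᵐ[ωa d a] fun Y => kernelConst d a t * chirp t X *
      (hankelKernel a ((frequencyScale t X).2 * Y.2) •
        𝐞 (-((frequencyScale t X).1 ⬝ᵥ Y.1)) • v Y) := by
  filter_upwards [ae_ωa_snd_pos d a] with Y hY
  rw [hv, SK_eq_chirp_mul_fourierHankel_kernel ht hX hY]

lemma integral_SK_mul (ht : t ≠ 0) {X : (Fin d → ℝ) × ℝ} (hX : 0 < X.2)
    {u v : (Fin d → ℝ) × ℝ → ℂ} (hv : ∀ Y, v Y = chirp t Y * u Y) :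
    ∫ Y, SK d a X Y t * u Y ∂ωa d a
      = kernelConst d a t * chirp t X * fourierHankel a v (frequencyScale t X) := by
  rw [integral_congr_ae (SK_mul_ae_eq ht hX hv), integral_const_mul, fourierHankel]

theorem integrable_SK_mul (ha : -1 < a) (ht : t ≠ 0) (u : SchwartzMap ((Fin d → ℝ) × ℝ) ℂ)
    {X : (Fin d → ℝ) × ℝ} (hX : 0 < X.2) : Integrable (fun Y => SK d a X Y t * u Y) (ωa d a) := by
  obtain ⟨v, hv⟩ := exists_schwartzMap_eq_chirp_mul t u
  exact ((integrable_fourierHankel_integrand ha v (frequencyScale t X)).const_mul _).congr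
    (SK_mul_ae_eq ht hX hv).symm

lemma enorm_kernelConst_sq_mul_lintegral_comp_frequencyScale (ht : t ≠ 0)
    {F : (Fin d → ℝ) × ℝ → ℝ≥0∞} (hF : Measurable F) :
    ‖kernelConst d a t‖ₑ ^ 2 * ∫⁻ X, F (frequencyScale t X) ∂ωa d a = ∫⁻ X, F X ∂ωa d a := by
  have hjacobian : |(((4 * Real.pi * t)⁻¹) ^ d)⁻¹| * ((2 * |t|)⁻¹) ^ (-(a + 1))
      = (4 * Real.pi * |t|) ^ d * (2 * |t|) ^ (a + 1) := by
    rw [inv_pow, inv_inv, abs_pow, abs_mul, abs_of_pos (by positivity : 0 < 4 * Real.pi),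
      Real.inv_rpow (by positivity), Real.rpow_neg (by positivity), inv_inv]
  have hconst : ‖kernelConst d a t‖ ^ 2 * ((4 * Real.pi * |t|) ^ d * (2 * |t|) ^ (a + 1)) = 1 := by
    rw [norm_kernelConst_sq d a ht]
    field_simp
  simp only [frequencyScale]
  rw [lintegral_ωa_comp_smul (by positivity) (by positivity) hF, hjacobian, ← mul_assoc,
    ← ofReal_norm, ← ENNReal.ofReal_pow (norm_nonneg _), ← ENNReal.ofReal_mul (by positivity),
    hconst, ENNReal.ofReal_one, one_mul]

theorem lintegral_enorm_sq_integral_SK_mul (ha : -1 < a) (ht : t ≠ 0)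
    (u : SchwartzMap ((Fin d → ℝ) × ℝ) ℂ) :
    ∫⁻ X, ‖∫ Y, SK d a X Y t * u Y ∂ωa d a‖ₑ ^ 2 ∂ωa d a = ∫⁻ X, ‖u X‖ₑ ^ 2 ∂ωa d a := by
  obtain ⟨v, hv⟩ := exists_schwartzMap_eq_chirp_mul t u
  have hmeas : Measurable fun X => ‖fourierHankel a v X‖ₑ ^ 2 :=
    (stronglyMeasurable_fourierHankel a v.continuous).measurable.enorm.pow_const 2
  calc ∫⁻ X, ‖∫ Y, SK d a X Y t * u Y ∂ωa d a‖ₑ ^ 2 ∂ωa d a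
      = ∫⁻ X, ‖kernelConst d a t‖ₑ ^ 2 * ‖fourierHankel a v (frequencyScale t X)‖ₑ ^ 2
          ∂ωa d a := by
        refine lintegral_congr_ae ((ae_ωa_snd_pos d a).mono fun X hX => ?_)
        simp only [integral_SK_mul ht hX hv, enorm_mul, enorm_chirp, mul_one, mul_pow]
    _ = ∫⁻ X, ‖fourierHankel a v X‖ₑ ^ 2 ∂ωa d a := by
        rw [lintegral_const_mul' _ _ (by simp),
          enorm_kernelConst_sq_mul_lintegral_comp_frequencyScale ht hmeas]
    _ = ∫⁻ X, ‖v X‖ₑ ^ 2 ∂ωa d a := lintegral_enorm_sq_fourierHankel ha v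
    _ = ∫⁻ X, ‖u X‖ₑ ^ 2 ∂ωa d a := by simp only [hv, enorm_mul, enorm_chirp, one_mul]

end Propagator

/-- For `d ≥ 1`, `a > -1`, `t ≠ 0` and Schwartz data `u₀`, the integral
`𝕊_a(t)u₀(X) = ∫ 𝕊_a(X,Y,t) u₀(Y) dω_a(Y)` converges absolutely for every `X` in the
half-space, and conservation of mass holds:
`‖𝕊_a(t)u₀‖_{L²_a} = ‖u₀‖_{L²_a}`. -/
theorem schrodinger_bessel_mass_conservation
    (d : ℕ) (hd : 1 ≤ d) (a : ℝ) (ha : -1 < a) (t : ℝ) (ht : t ≠ 0)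
    (u₀ : SchwartzMap ((Fin d → ℝ) × ℝ) ℂ) :
    (∀ X : (Fin d → ℝ) × ℝ, 0 < X.2 → Integrable (fun Y => SK d a X Y t * u₀ Y) (ωa d a)) ∧
    eLpNorm (fun X => ∫ Y, SK d a X Y t * u₀ Y ∂(ωa d a)) 2 (ωa d a)
      = eLpNorm (fun X => u₀ X) 2 (ωa d a) := by
  refine ⟨fun X hX => integrable_SK_mul ha ht u₀ hX, ?_⟩
  have hsq := lintegral_enorm_sq_integral_SK_mul ha ht u₀
  rw [lintegral_enorm_sq_eq_eLpNorm_sq, lintegral_enorm_sq_eq_eLpNorm_sq] at hsq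
  exact (ENNReal.pow_right_strictMono two_ne_zero).injective hsq

end
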